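/- For λ > −1, t ∈ ℝ and integer m ≥ 2, let P_n be the monic orthogonal polynomials of the generalised higher order Freud weight ω(x;t,λ) = |x|^{2λ+1} exp(t x² − x^{2m}). Then for every n ≥ 2m there exist real numbers ρ_{n,0}, ρ_{n,2}, …, ρ_{n,2m} with ρ_{n,0} = n such that the structure relation x P_n′(x) = Σ_{ℓ=0}^{m} ρ_{n,2ℓ} P_{n−2ℓ}(x) holds as an identity of polynomials; equivalently, x P_n′(x) − n P_n(x) lies in the span of P_{n−2}, P_{n−4}, …, P_{n−2m}. -/

import Mathlib

open MeasureTheory Real Polynomial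

/-- The generalised higher order Freud weight `ω(x;t,λ) = |x|^{2λ+1} exp(t x² − x^{2m})`. -/
noncomputable def freudWeight (m : ℕ) (lam t x : ℝ) : ℝ :=
  |x| ^ (2 * lam + 1) * Real.exp (t * x ^ 2 - x ^ (2 * m))

/-!
Let `L` be the moment functional of the weight. The Pearson equation, integrated by parts, reads
`L (X p') = L (Q p)` with `Q` even of degree `2m`. Since `L (Pₙ · X Pₖ') = 0` for `k < n`, the
coefficient of `Pₖ` in the orthogonal expansion of `X Pₙ'` is, up to normalisation,
`L (X Pₙ' Pₖ) = L (Q Pₙ Pₖ)`. This vanishes for `k + 2m < n` by orthogonality and for `n + k` odd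
because `Pₙ` has the parity of `n` and `L` kills odd polynomials.
-/

open Filter Set Topology

theorem sum_range_eq_sum_range_two_mul {M : Type*} [AddCommMonoid M] {f : ℕ → M} {a b : ℕ}
    (hodd : ∀ j, Odd j → f j = 0) (ha : ∀ j, a ≤ j → f j = 0) (hb : ∀ j, 2 * b ≤ j → f j = 0) :
    ∑ j ∈ Finset.range a, f j = ∑ ℓ ∈ Finset.range b, f (2 * ℓ) := by
  symm
  refine Finset.sum_bij_ne_zero (fun ℓ _ _ ↦ 2 * ℓ) (fun ℓ _ hℓ ↦ ?_) (by grind)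
    (fun j _ hj ↦ ?_) (fun _ _ _ ↦ rfl)
  · exact Finset.mem_range.2 (not_le.1 (mt (ha _) hℓ))
  · obtain ⟨ℓ, rfl⟩ := even_iff_two_dvd.1 (Nat.not_odd_iff_even.1 (mt (hodd j) hj))
    have hℓ : 2 * ℓ < 2 * b := not_le.1 (mt (hb _) hj)
    exact ⟨ℓ, Finset.mem_range.2 (by lia), hj, rfl⟩

theorem coeff_X_mul_derivative {R : Type*} [Semiring R] (p : R[X]) (k : ℕ) :
    (X * derivative p).coeff k = p.coeff k * k := by
  cases k <;> simp [coeff_X_mul, coeff_derivative]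

theorem degree_X_mul_derivative_le {R : Type*} [Semiring R] (p : R[X]) :
    (X * derivative p).degree ≤ p.degree :=
  degree_le_iff_coeff_zero _ _ |>.2 fun k hk ↦ by
    rw [coeff_X_mul_derivative, coeff_eq_zero_of_degree_lt hk, zero_mul]

section Functional

variable {K : Type*} [Field K] {L : K[X] →ₗ[K] K} {S : Polynomial.Sequence K}

/-- `S` is a sequence of orthogonal polynomials for the regular (quasi-definite) functional `L`:
distinct members are orthogonal and none is self-orthogonal. -/
structure IsOrthogonalSequence (L : K[X] →ₗ[K] K) (S : Polynomial.Sequence K) : Prop where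
  pairwise : Pairwise fun j k ↦ L (S j * S k) = 0
  self_ne_zero : ∀ k, L (S k * S k) ≠ 0

theorem mem_span_image_range_of_degree_lt (S : Polynomial.Sequence K) {q : K[X]} {n : ℕ}
    (hq : q.degree < n) : q ∈ Submodule.span K (S '' Finset.range n) := by
  rw [Finset.coe_range, S.span_degreeLT fun i _ ↦ by simp]
  exact mem_degreeLT.2 hq

namespace IsOrthogonalSequence

theorem eq_sum_of_degree_lt (h : IsOrthogonalSequence L S) {q : K[X]} {n : ℕ}
    (hq : q.degree < n) :
    q = ∑ k ∈ Finset.range n, C (L (q * S k) / L (S k * S k)) * S k := by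
  obtain ⟨c, rfl⟩ := (Submodule.mem_span_image_finset_iff_exists_fun' K).1
    (mem_span_image_range_of_degree_lt S hq)
  refine Finset.sum_congr rfl fun k hk ↦ ?_
  have hc : L ((∑ i ∈ Finset.range n, c i • S i) * S k) = c k * L (S k * S k) := by
    simp only [Finset.sum_mul, smul_mul_assoc, map_sum, map_smul, smul_eq_mul]
    exact Finset.sum_eq_single_of_mem k hk fun i _ hik ↦ by rw [h.pairwise hik, mul_zero]
  rw [hc, mul_div_cancel_right₀ _ (h.self_ne_zero k), smul_eq_C_mul]

theorem map_mul_eq_zero_of_degree_lt (h : IsOrthogonalSequence L S) {q : K[X]} {n : ℕ}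
    (hq : q.degree < n) : L (S n * q) = 0 := by
  rw [h.eq_sum_of_degree_lt hq, Finset.mul_sum, map_sum]
  refine Finset.sum_eq_zero fun k hk ↦ ?_
  rw [mul_left_comm, ← smul_eq_C_mul, map_smul, h.pairwise (Finset.mem_range.1 hk).ne', smul_zero]

theorem comp_neg_X (h : IsOrthogonalSequence L S) (hL : ∀ p : K[X], L (p.comp (-X)) = L p)
    (n : ℕ) : (S n).comp (-X) = (-1) ^ n * S n := by
  have horth : ∀ k < n, L ((S n).comp (-X) * S k) = 0 := fun k hk ↦ by
    have hdeg : ((S k).comp (-X)).degree < n := by simpa using hk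
    rw [← hL, mul_comp_neg_X, comp_neg_X_comp_neg_X, h.map_mul_eq_zero_of_degree_lt hdeg]
  obtain ⟨c, hc⟩ : ∃ c, (S n).comp (-X) = C c * S n := by
    have hdeg : ((S n).comp (-X)).degree < ((n + 1 : ℕ) : WithBot ℕ) := by
      simpa using Nat.cast_lt.2 n.lt_succ_self
    refine ⟨_, (h.eq_sum_of_degree_lt hdeg).trans <|
      Finset.sum_eq_single_of_mem n (Finset.self_mem_range_succ n) fun k hk hkn ↦ ?_⟩
    rw [horth k (by grind), zero_div, C_0, zero_mul]
  have hlead : (-1) ^ n * (S n).leadingCoeff = c * (S n).leadingCoeff := by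
    simpa using congrArg leadingCoeff hc
  rw [hc, ← mul_right_cancel₀ (leadingCoeff_ne_zero.2 (S.ne_zero n)) hlead]
  simp

theorem map_X_mul_derivative_mul_self (h : IsOrthogonalSequence L S) (n : ℕ) :
    L (X * derivative (S n) * S n) = n * L (S n * S n) := by
  have hdeg : (X * derivative (S n) - C (n : K) * S n).degree < (n : WithBot ℕ) := by
    rw [degree_lt_iff_coeff_zero]
    intro k hk
    rw [coeff_sub, coeff_X_mul_derivative, coeff_C_mul]
    obtain rfl | hk := hk.eq_or_lt
    · ring
    · simp [coeff_eq_zero_of_natDegree_lt ((S.natDegree_eq n).trans_lt hk)]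
  have hzero := h.map_mul_eq_zero_of_degree_lt hdeg
  rwa [mul_comm, sub_mul, mul_assoc (C _), ← smul_eq_C_mul, map_sub, map_smul, sub_eq_zero]
    at hzero

section Pearson

variable {Q : K[X]}

theorem map_X_mul_derivative_mul (h : IsOrthogonalSequence L S)
    (hQ : ∀ p, L (X * derivative p) = L (Q * p)) {n k : ℕ} (hk : k < n) :
    L (X * derivative (S n) * S k) = L (Q * (S n * S k)) := by
  have hdeg : (X * derivative (S k)).degree < (n : WithBot ℕ) :=
    (degree_X_mul_derivative_le _).trans_lt (by simpa using hk)
  calc L (X * derivative (S n) * S k)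
      = L (X * derivative (S n) * S k) + L (S n * (X * derivative (S k))) := by
        rw [h.map_mul_eq_zero_of_degree_lt hdeg, add_zero]
    _ = L (X * derivative (S n * S k)) := by rw [← map_add, derivative_mul]; ring_nf
    _ = L (Q * (S n * S k)) := hQ _

theorem map_X_mul_derivative_mul_eq_zero_of_lt (h : IsOrthogonalSequence L S)
    (hQ : ∀ p, L (X * derivative p) = L (Q * p)) {n k : ℕ} (hk : k + Q.natDegree < n) :
    L (X * derivative (S n) * S k) = 0 := by
  have hdeg : (Q * S k).degree < n := by
    refine degree_le_natDegree.trans_lt (Nat.cast_lt.2 (natDegree_mul_le.trans_lt ?_))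
    rwa [S.natDegree_eq, add_comm]
  rw [h.map_X_mul_derivative_mul hQ (by lia), mul_left_comm, h.map_mul_eq_zero_of_degree_lt hdeg]

theorem map_X_mul_derivative_mul_eq_zero_of_odd [NeZero (2 : K)] (h : IsOrthogonalSequence L S)
    (hL : ∀ p : K[X], L (p.comp (-X)) = L p) (hQ : ∀ p, L (X * derivative p) = L (Q * p))
    (hQeven : Q.comp (-X) = Q) {n k : ℕ} (hk : k < n) (hnk : Odd (n + k)) :
    L (X * derivative (S n) * S k) = 0 := by
  have hcomp : (Q * (S n * S k)).comp (-X) = -(Q * (S n * S k)) := by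
    rw [mul_comp_neg_X, mul_comp_neg_X, hQeven, h.comp_neg_X hL, h.comp_neg_X hL,
      mul_mul_mul_comm, ← pow_add, hnk.neg_one_pow]
    ring
  have hneg : -L (Q * (S n * S k)) = L (Q * (S n * S k)) := by rw [← map_neg, ← hcomp, hL]
  rw [h.map_X_mul_derivative_mul hQ hk]
  have htwo : 2 * L (Q * (S n * S k)) = 0 := by linear_combination -hneg
  exact (mul_eq_zero.1 htwo).resolve_left two_ne_zero

end Pearson

end IsOrthogonalSequence

/-- The coefficient `ρ_{n,j}` of `S (n - j)` in the orthogonal expansion of `X * (S n)'`, set to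
zero for `n < j`, where the truncated subtraction would give `S 0` instead of `S (n - j) = 0`. -/
noncomputable def structureCoeff (L : K[X] →ₗ[K] K) (S : Polynomial.Sequence K) (n j : ℕ) : K :=
  if j ≤ n then L (X * derivative (S n) * S (n - j)) / L (S (n - j) * S (n - j)) else 0

theorem structureCoeff_of_lt (L : K[X] →ₗ[K] K) (S : Polynomial.Sequence K) {n j : ℕ}
    (hj : n < j) : structureCoeff L S n j = 0 :=
  if_neg hj.not_ge

namespace IsOrthogonalSequence

theorem structureCoeff_zero (h : IsOrthogonalSequence L S) (n : ℕ) :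
    structureCoeff L S n 0 = n := by
  simp [structureCoeff, h.map_X_mul_derivative_mul_self, h.self_ne_zero]

theorem X_mul_derivative_eq_sum_structureCoeff (h : IsOrthogonalSequence L S) (n : ℕ) :
    X * derivative (S n) =
      ∑ j ∈ Finset.range (n + 1), C (structureCoeff L S n j) * S (n - j) := by
  have hdeg : (X * derivative (S n)).degree < ((n + 1 : ℕ) : WithBot ℕ) :=
    (degree_X_mul_derivative_le _).trans_lt (by simpa using Nat.cast_lt.2 n.lt_succ_self)
  conv_lhs => rw [h.eq_sum_of_degree_lt hdeg]
  rw [← Finset.sum_range_reflect]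
  refine Finset.sum_congr rfl fun j hj ↦ ?_
  rw [structureCoeff, if_pos (Finset.mem_range_succ_iff.1 hj), Nat.add_sub_cancel]

theorem X_mul_derivative_eq_sum_two_mul [NeZero (2 : K)] (h : IsOrthogonalSequence L S)
    (hL : ∀ p : K[X], L (p.comp (-X)) = L p) {Q : K[X]}
    (hQ : ∀ p, L (X * derivative p) = L (Q * p)) (hQeven : Q.comp (-X) = Q) {d : ℕ}
    (hQdeg : Q.natDegree ≤ 2 * d) (n : ℕ) :
    X * derivative (S n) =
      ∑ ℓ ∈ Finset.range (d + 1), C (structureCoeff L S n (2 * ℓ)) * S (n - 2 * ℓ) := by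
  have hzero {j : ℕ} (hj : j ≤ n → L (X * derivative (S n) * S (n - j)) = 0) :
      C (structureCoeff L S n j) * S (n - j) = 0 := by
    by_cases hjn : j ≤ n
    · simp [structureCoeff, hj hjn]
    · simp [structureCoeff, hjn]
  rw [h.X_mul_derivative_eq_sum_structureCoeff]
  refine sum_range_eq_sum_range_two_mul (fun j hj ↦ hzero fun hjn ↦ ?_)
    (fun j hj ↦ hzero fun hjn ↦ by lia) (fun j hj ↦ hzero fun hjn ↦ ?_)
  · exact h.map_X_mul_derivative_mul_eq_zero_of_odd hL hQ hQeven (by grind) (by grind)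
  · exact h.map_X_mul_derivative_mul_eq_zero_of_lt hQ (by lia)

end IsOrthogonalSequence

end Functional

section RealAnalysis

theorem integral_eq_zero_of_hasDerivAt_of_ne {E : Type*} [NormedAddCommGroup E] [NormedSpace ℝ E]
    [CompleteSpace E] {f f' : ℝ → E} {a : ℝ} (hcont : ContinuousAt f a)
    (hderiv : ∀ x ≠ a, HasDerivAt f (f' x) x) (hf' : Integrable f') (hf : Integrable f) :
    ∫ x, f' x = 0 := by
  have hright : ∀ x ∈ Ioi a, HasDerivAt f (f' x) x := fun x hx ↦ hderiv x (ne_of_gt hx)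
  have hleft : ∀ x ∈ Iio a, HasDerivAt f (f' x) x := fun x hx ↦ hderiv x (ne_of_lt hx)
  have htop : Tendsto f atTop (𝓝 0) := tendsto_zero_of_hasDerivAt_of_integrableOn_Ioi hright
    hf'.integrableOn hf.integrableOn
  have hbot : Tendsto f atBot (𝓝 0) := tendsto_zero_of_hasDerivAt_of_integrableOn_Iic
    (fun x hx ↦ hleft x ((mem_Iic.1 hx).trans_lt (sub_one_lt a)))
    hf'.integrableOn hf.integrableOn
  rw [← intervalIntegral.integral_Iic_add_Ioi (b := a) hf'.integrableOn hf'.integrableOn,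
    integral_Ioi_of_hasDerivAt_of_tendsto hcont.continuousWithinAt hright hf'.integrableOn htop,
    integral_Iic_of_hasDerivAt_of_tendsto hcont.continuousWithinAt hleft hf'.integrableOn hbot]
  simp

theorem integrable_comp_abs_of_integrableOn_Ioi {E : Type*} [NormedAddCommGroup E] {f : ℝ → E}
    (hf : IntegrableOn f (Ioi 0)) : Integrable fun x ↦ f |x| := by
  have hright : IntegrableOn (fun x ↦ f |x|) (Ioi 0) :=
    hf.congr_fun (fun x hx ↦ by rw [abs_of_pos hx]) measurableSet_Ioi
  have hleft : IntegrableOn (fun x ↦ f |x|) (Iic 0) := by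
    rw [integrableOn_Iic_iff_integrableOn_Iio]
    simpa using hright.comp_neg
  rw [← integrableOn_univ, ← Iic_union_Ioi (a := (0 : ℝ))]
  exact hleft.union hright

theorem integrable_abs_rpow_mul_exp_neg_mul_sq {b s : ℝ} (hb : 0 < b) (hs : -1 < s) :
    Integrable fun x : ℝ ↦ |x| ^ s * exp (-b * x ^ 2) := by
  simpa using integrable_comp_abs_of_integrableOn_Ioi (integrableOn_rpow_mul_exp_neg_mul_sq hb hs)

theorem hasDerivAt_mul_abs_rpow (α : ℝ) {x : ℝ} (hx : x ≠ 0) :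
    HasDerivAt (fun y ↦ y * |y| ^ α) ((α + 1) * |x| ^ α) x := by
  have habs : |x| ≠ 0 := abs_ne_zero.2 hx
  refine ((hasDerivAt_id x).mul ((hasDerivAt_abs hx).rpow_const (Or.inl habs))).congr_deriv ?_
  have hpow : |x| ^ α = |x| ^ (α - 1) * |x| := by rw [← rpow_add_one habs, sub_add_cancel]
  simp only [id, hpow]
  linear_combination α * |x| ^ (α - 1) * self_mul_sign x

theorem continuous_mul_abs_rpow {α : ℝ} (hα : -1 < α) : Continuous fun x : ℝ ↦ x * |x| ^ α := by
  refine continuous_iff_continuousAt.2 fun x ↦ ?_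
  obtain rfl | hx := eq_or_ne x 0
  · have hlim : Tendsto (fun y : ℝ ↦ |y| ^ (α + 1)) (𝓝 0) (𝓝 0) := by
      have hcont : Continuous fun y : ℝ ↦ |y| ^ (α + 1) :=
        continuous_abs.rpow_const fun _ ↦ Or.inr (by linarith)
      simpa [zero_rpow (by linarith : α + 1 ≠ 0)] using hcont.tendsto 0
    rw [ContinuousAt, zero_mul]
    refine squeeze_zero_norm (fun y ↦ ?_) hlim
    obtain rfl | hy := eq_or_ne y 0
    · simp [zero_rpow (by linarith : α + 1 ≠ 0)]
    · rw [norm_mul, norm_eq_abs, norm_of_nonneg (by positivity), rpow_add_one (abs_ne_zero.2 hy),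
        mul_comm]
  · exact (hasDerivAt_mul_abs_rpow α hx).continuousAt

theorem exists_mul_sub_le_eval {U : ℝ[X]} (hU : Tendsto (fun y ↦ U.eval y) atTop atTop) :
    ∃ δ > 0, ∃ c, ∀ y ≥ 0, δ * y - c ≤ U.eval y := by
  have hdeg : (X : ℝ[X]).degree ≤ U.degree := by
    rw [degree_X]
    exact Nat.WithBot.one_le_iff_zero_lt.2 (U.tendsto_atTop_iff_leadingCoeff_nonneg.1 hU).1
  obtain ⟨A, hA, hbound⟩ := (isBigO_atTop_of_degree_le X U hdeg).exists_pos
  obtain ⟨b, hb⟩ := eventually_atTop.1 (hbound.bound.and (hU.eventually_ge_atTop 0))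
  obtain ⟨c, hc⟩ := isCompact_Icc.bddBelow_image
    (f := fun y ↦ U.eval y - A⁻¹ * y) (K := Icc 0 b) (by fun_prop)
  refine ⟨A⁻¹, inv_pos.2 hA, |c|, fun y hy ↦ ?_⟩
  obtain hyb | hby := le_total y b
  · have := hc (mem_image_of_mem _ ⟨hy, hyb⟩)
    linarith [neg_abs_le c]
  · obtain ⟨hle, hnonneg⟩ := hb y hby
    rw [eval_X, norm_of_nonneg hy, norm_of_nonneg hnonneg] at hle
    linarith [(inv_mul_le_iff₀ hA).2 hle, abs_nonneg c]

end RealAnalysis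

section MomentFunctional

variable {w : ℝ → ℝ}

/-- The functional `p ↦ ∫ p w` on polynomials, for a weight `w` all of whose moments exist. -/
noncomputable def momentFunctional (w : ℝ → ℝ)
    (hw : ∀ p : ℝ[X], Integrable fun x ↦ p.eval x * w x) : ℝ[X] →ₗ[ℝ] ℝ where
  toFun p := ∫ x, p.eval x * w x
  map_add' p q := by simp only [eval_add, add_mul, integral_add (hw p) (hw q)]
  map_smul' c p := by
    simp only [eval_smul, smul_eq_mul, mul_assoc, RingHom.id_apply, integral_const_mul]

theorem momentFunctional_apply (hw : ∀ p : ℝ[X], Integrable fun x ↦ p.eval x * w x) (p : ℝ[X]) :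
    momentFunctional w hw p = ∫ x, p.eval x * w x :=
  rfl

theorem momentFunctional_comp_neg_X (hw : ∀ p : ℝ[X], Integrable fun x ↦ p.eval x * w x)
    (heven : ∀ x, w (-x) = w x) (p : ℝ[X]) :
    momentFunctional w hw (p.comp (-X)) = momentFunctional w hw p := by
  rw [momentFunctional_apply, momentFunctional_apply, ← integral_neg_eq_self]
  simp [heven]

theorem momentFunctional_mul_self_ne_zero (hw : ∀ p : ℝ[X], Integrable fun x ↦ p.eval x * w x)
    (hpos : ∀ᵐ x, 0 < w x) {p : ℝ[X]} (hp : p ≠ 0) : momentFunctional w hw (p * p) ≠ 0 := by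
  intro hzero
  have hnonneg : 0 ≤ᵐ[volume] fun x ↦ (p * p).eval x * w x := by
    filter_upwards [hpos] with x hx
    rw [eval_mul]
    exact mul_nonneg (mul_self_nonneg _) hx.le
  have hae : (fun x ↦ p.eval x) =ᵐ[volume] fun _ ↦ 0 := by
    filter_upwards [(integral_eq_zero_iff_of_nonneg_ae hnonneg (hw _)).1 hzero, hpos] with x hx hwx
    simpa [hwx.ne'] using hx
  have heq := (Continuous.ae_eq_iff_eq volume p.continuous continuous_const).1 hae
  exact hp (Polynomial.funext fun x ↦ by simpa using congrFun heq x)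

theorem momentFunctional_X_mul_derivative (hw : ∀ p : ℝ[X], Integrable fun x ↦ p.eval x * w x)
    (hcont : ContinuousAt (fun x ↦ x * w x) 0) {Q : ℝ[X]}
    (hpearson : ∀ x ≠ 0, HasDerivAt (fun y ↦ y * w y) (-(Q.eval x * w x)) x) (p : ℝ[X]) :
    momentFunctional w hw (X * derivative p) = momentFunctional w hw (Q * p) := by
  have hfun : (fun x ↦ (X * p).eval x * w x) = fun x ↦ p.eval x * (x * w x) := by
    funext x
    rw [eval_mul, eval_X]
    ring
  have hderiv : ∀ x ≠ 0, HasDerivAt (fun y ↦ (X * p).eval y * w y)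
      ((X * derivative p - Q * p).eval x * w x) x := fun x hx ↦ by
    rw [hfun]
    refine ((p.hasDerivAt x).mul (hpearson x hx)).congr_deriv ?_
    simp only [eval_sub, eval_mul, eval_X]
    ring
  have hcont' : ContinuousAt (fun x ↦ (X * p).eval x * w x) 0 := by
    rw [hfun]
    exact p.continuous.continuousAt.mul hcont
  rw [← sub_eq_zero, ← map_sub]
  exact integral_eq_zero_of_hasDerivAt_of_ne hcont' hderiv (hw _) (hw _)

theorem isOrthogonalSequence_momentFunctional
    (hw : ∀ p : ℝ[X], Integrable fun x ↦ p.eval x * w x) (hpos : ∀ᵐ x, 0 < w x)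
    {P : Polynomial.Sequence ℝ}
    (horth : Pairwise fun j k ↦ ∫ x, (P j).eval x * (P k).eval x * w x = 0) :
    IsOrthogonalSequence (momentFunctional w hw) P where
  pairwise j k hjk := by simpa only [momentFunctional_apply, eval_mul] using horth hjk
  self_ne_zero k := momentFunctional_mul_self_ne_zero hw hpos (P.ne_zero k)

end MomentFunctional

section ExponentialWeight

/-- The even weight `|x| ^ α * exp (-U (x ^ 2))` with polynomial potential `U`; the Freud weight is
the case `U = X ^ m - t X`, `α = 2 λ + 1`. -/
noncomputable def evenExpWeight (U : ℝ[X]) (α x : ℝ) : ℝ :=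
  |x| ^ α * exp (-U.eval (x ^ 2))

/-- The polynomial `Q` in the Pearson equation `(x w)' = -Q w` of `w = evenExpWeight U α`. -/
noncomputable def pearsonPolynomial (U : ℝ[X]) (α : ℝ) : ℝ[X] :=
  (C 2 * (X * derivative U) - C (α + 1)).comp (X ^ 2)

variable {U : ℝ[X]} {α : ℝ}

theorem evenExpWeight_neg (U : ℝ[X]) (α x : ℝ) :
    evenExpWeight U α (-x) = evenExpWeight U α x := by
  simp [evenExpWeight]

theorem evenExpWeight_pos (U : ℝ[X]) (α : ℝ) {x : ℝ} (hx : x ≠ 0) : 0 < evenExpWeight U α x := by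
  unfold evenExpWeight
  positivity

theorem measurable_evenExpWeight (U : ℝ[X]) (α : ℝ) : Measurable (evenExpWeight U α) := by
  unfold evenExpWeight
  fun_prop

theorem ae_evenExpWeight_pos (U : ℝ[X]) (α : ℝ) : ∀ᵐ x, 0 < evenExpWeight U α x := by
  filter_upwards [compl_mem_ae_iff.2 (measure_singleton (0 : ℝ))] with x hx
  exact evenExpWeight_pos U α hx

theorem integrable_pow_mul_evenExpWeight (hU : Tendsto (fun y ↦ U.eval y) atTop atTop)
    (hα : -1 < α) (k : ℕ) : Integrable fun x ↦ x ^ k * evenExpWeight U α x := by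
  obtain ⟨δ, hδ, c, hc⟩ := exists_mul_sub_le_eval hU
  have hs : -1 < k + α := by linarith [k.cast_nonneg (α := ℝ)]
  refine ((integrable_abs_rpow_mul_exp_neg_mul_sq hδ hs).const_mul (exp c)).mono'
    ((measurable_id.pow_const k).mul (measurable_evenExpWeight U α)).aestronglyMeasurable ?_
  filter_upwards [compl_mem_ae_iff.2 (measure_singleton (0 : ℝ))] with x hx
  have hexp : exp (-U.eval (x ^ 2)) ≤ exp c * exp (-δ * x ^ 2) := by
    rw [← exp_add]
    exact exp_le_exp.2 (by linarith [hc (x ^ 2) (sq_nonneg x)])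
  calc ‖x ^ k * evenExpWeight U α x‖
      = |x| ^ k * |x| ^ α * exp (-U.eval (x ^ 2)) := by
        rw [norm_mul, norm_of_nonneg (evenExpWeight_pos U α hx).le, norm_pow, norm_eq_abs,
          evenExpWeight, mul_assoc]
    _ ≤ |x| ^ k * |x| ^ α * (exp c * exp (-δ * x ^ 2)) := by gcongr
    _ = exp c * (|x| ^ (k + α) * exp (-δ * x ^ 2)) := by
        rw [rpow_add (abs_pos.2 hx), rpow_natCast]
        ring

theorem integrable_eval_mul_evenExpWeight (hU : Tendsto (fun y ↦ U.eval y) atTop atTop)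
    (hα : -1 < α) (p : ℝ[X]) : Integrable fun x ↦ p.eval x * evenExpWeight U α x := by
  induction p using Polynomial.induction_on' with
  | add p q hp hq =>
    simp only [eval_add, add_mul]
    exact hp.add hq
  | monomial k a =>
    simpa only [eval_monomial, mul_assoc] using
      (integrable_pow_mul_evenExpWeight hU hα k).const_mul a

theorem continuous_mul_evenExpWeight (U : ℝ[X]) (hα : -1 < α) :
    Continuous fun x ↦ x * evenExpWeight U α x := by
  simp only [evenExpWeight, ← mul_assoc]
  exact (continuous_mul_abs_rpow hα).mul (by fun_prop)

theorem hasDerivAt_mul_evenExpWeight (U : ℝ[X]) (α : ℝ) {x : ℝ} (hx : x ≠ 0) :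
    HasDerivAt (fun y ↦ y * evenExpWeight U α y)
      (-((pearsonPolynomial U α).eval x * evenExpWeight U α x)) x := by
  simp only [evenExpWeight, ← mul_assoc]
  have hexp : HasDerivAt (fun y ↦ exp (-U.eval (y ^ 2)))
      (exp (-U.eval (x ^ 2)) * -((derivative U).eval (x ^ 2) * (2 * x))) x := by
    simpa using ((U.hasDerivAt (x ^ 2)).comp x (hasDerivAt_pow 2 x)).neg.exp
  refine ((hasDerivAt_mul_abs_rpow α hx).mul hexp).congr_deriv ?_
  simp only [pearsonPolynomial, eval_comp, eval_sub, eval_mul, eval_pow, eval_X, eval_C]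
  ring

theorem pearsonPolynomial_comp_neg_X (U : ℝ[X]) (α : ℝ) :
    (pearsonPolynomial U α).comp (-X) = pearsonPolynomial U α := by
  simp [pearsonPolynomial, comp_assoc]

theorem natDegree_pearsonPolynomial_le (U : ℝ[X]) (α : ℝ) :
    (pearsonPolynomial U α).natDegree ≤ 2 * U.natDegree := by
  have hX : (X * derivative U).natDegree ≤ U.natDegree :=
    natDegree_le_natDegree (degree_X_mul_derivative_le U)
  rw [pearsonPolynomial, natDegree_comp, natDegree_X_pow, mul_comm, natDegree_sub_C]
  exact Nat.mul_le_mul_left 2 ((natDegree_C_mul_le _ _).trans hX)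

end ExponentialWeight

theorem structure_relation_general {U : ℝ[X]} (hU : Tendsto (fun y ↦ U.eval y) atTop atTop)
    {α : ℝ} (hα : -1 < α) (P : Polynomial.Sequence ℝ)
    (horth : Pairwise fun j k ↦ ∫ x, (P j).eval x * (P k).eval x * evenExpWeight U α x = 0)
    (n : ℕ) :
    ∃ ρ : ℕ → ℝ, ρ 0 = n ∧ (∀ j, n < j → ρ j = 0) ∧
      X * derivative (P n) =
        ∑ ℓ ∈ Finset.range (U.natDegree + 1), C (ρ (2 * ℓ)) * P (n - 2 * ℓ) := by
  have hw := integrable_eval_mul_evenExpWeight hU hα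
  have hP := isOrthogonalSequence_momentFunctional hw (ae_evenExpWeight_pos U α) horth
  have hsymm := momentFunctional_comp_neg_X hw (evenExpWeight_neg U α)
  have hpearson := momentFunctional_X_mul_derivative hw
    (continuous_mul_evenExpWeight U hα).continuousAt fun _ ↦ hasDerivAt_mul_evenExpWeight U α
  exact ⟨structureCoeff _ P n, hP.structureCoeff_zero n, fun _ ↦ structureCoeff_of_lt _ P,
    hP.X_mul_derivative_eq_sum_two_mul hsymm hpearson (pearsonPolynomial_comp_neg_X U α)
      (natDegree_pearsonPolynomial_le U α) n⟩

/-- The potential `X ^ m - t X` for which `evenExpWeight` is the Freud weight. -/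
noncomputable def freudPotential (m : ℕ) (t : ℝ) : ℝ[X] :=
  X ^ m - C t * X

theorem freudWeight_eq_evenExpWeight (m : ℕ) (lam t x : ℝ) :
    freudWeight m lam t x = evenExpWeight (freudPotential m t) (2 * lam + 1) x := by
  simp [freudWeight, evenExpWeight, freudPotential, pow_mul]

theorem monic_freudPotential {m : ℕ} (hm : 2 ≤ m) (t : ℝ) : (freudPotential m t).Monic :=
  monic_X_pow_sub ((degree_C_mul_X_le t).trans_lt (by exact_mod_cast hm))

theorem natDegree_freudPotential {m : ℕ} (hm : 2 ≤ m) (t : ℝ) :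
    (freudPotential m t).natDegree = m := by
  have hlt : (C t * X).natDegree < (X ^ m : ℝ[X]).natDegree := by
    rw [natDegree_X_pow]
    exact (natDegree_le_of_degree_le (degree_C_mul_X_le t)).trans_lt hm
  rw [freudPotential, natDegree_sub_eq_left_of_natDegree_lt hlt, natDegree_X_pow]

theorem tendsto_eval_freudPotential {m : ℕ} (hm : 2 ≤ m) (t : ℝ) :
    Tendsto (fun y ↦ (freudPotential m t).eval y) atTop atTop := by
  have hdeg : 0 < (freudPotential m t).degree := by
    rw [← natDegree_pos_iff_degree_pos, natDegree_freudPotential hm]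
    lia
  refine tendsto_atTop_of_leadingCoeff_nonneg _ hdeg ?_
  rw [(monic_freudPotential hm t).leadingCoeff]
  exact zero_le_one

/-- For `λ > −1`, `t ∈ ℝ` and integer `m ≥ 2`, the monic orthogonal
polynomials of the generalised higher order Freud weight satisfy, for every `n ≥ 2m`, the
structure relation `x P_n′(x) = Σ_{ℓ=0}^{m} ρ_{n,2ℓ} P_{n−2ℓ}(x)` with `ρ_{n,0} = n`. -/
theorem structure_relation (m : ℕ) (hm : 2 ≤ m) (lam t : ℝ) (hlam : -1 < lam)
    (P : ℕ → Polynomial ℝ)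
    (hmonic : ∀ n, (P n).Monic) (hdeg : ∀ n, (P n).natDegree = n)
    (horth : ∀ j k, j ≠ k →
      ∫ x : ℝ, (P j).eval x * (P k).eval x * freudWeight m lam t x = 0) :
    ∀ n : ℕ, 2 * m ≤ n → ∃ ρ : ℕ → ℝ, ρ 0 = (n : ℝ) ∧
      X * derivative (P n) =
        ∑ ℓ ∈ Finset.range (m + 1), C (ρ (2 * ℓ)) * P (n - 2 * ℓ) := by
  intro n _
  let S : Polynomial.Sequence ℝ :=
    ⟨P, fun k ↦ by rw [degree_eq_natDegree (hmonic k).ne_zero, hdeg k]⟩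
  simp only [freudWeight_eq_evenExpWeight] at horth
  obtain ⟨ρ, hρ, -, hsum⟩ := structure_relation_general (tendsto_eval_freudPotential hm t)
    (by linarith) S horth n
  exact ⟨ρ, hρ, by simpa only [natDegree_freudPotential hm] using hsum⟩
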